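/- arXiv:1309.3989 — 2 statements merged into one kernel-verified Lean document; each statement's English description precedes it below -/
import Mathlib

section
/- Let d ≥ 2 and let K be a convex body in ℝ^d such that a ball of radius r > 0 slides freely inside K. Let φ be a Borel measure on the unit sphere S^{d-1} satisfying φ ≤ a·σ for some constant a > 0. Then there exists a constant c > 0 (depending on K, a, d) such that for every ε > 0 and every point y ∈ ℝ^d with dist(y, K) = ε, one has ∫_{S^{d-1}} [h(K^y, u) − h(K, u)] dφ(u) ≤ c·ε^{(d+1)/2}. -/
open MeasureTheory Metric Set
open scoped InnerProductSpace ENNReal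

/-- The support function of a set `K`: `h(K, u) = sup_{x ∈ K} ⟪x, u⟫`. -/
noncomputable def suppFn {d : ℕ} (K : Set (EuclideanSpace ℝ (Fin d)))
    (u : EuclideanSpace ℝ (Fin d)) : ℝ :=
  sSup ((fun x => ⟪x, u⟫_ℝ) '' K)

/-- Spherical Lebesgue measure on the unit sphere of `ℝ^d`: the `(d-1)`-dimensional
Hausdorff measure restricted to the sphere. -/
noncomputable def sphericalMeasure (d : ℕ) :
    Measure (EuclideanSpace ℝ (Fin d)) :=
  (μH[(d : ℝ) - 1]).restrict (sphere (0 : EuclideanSpace ℝ (Fin d)) 1)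

/-!
Let `B(z, r) ⊆ K` be a ball containing a point of `K` nearly closest to `y`, and write
`y = z + (r + s) v` with `‖v‖ = 1`, so that `s ≤ 2 dist(y, K)`. Since `h(K, u) ≥ ⟪z, u⟫ + r` for
unit vectors `u`,

  `h(K^y, u) - h(K, u) = max (⟪y, u⟫ - h(K, u)) 0 ≤ max ((r + s) ⟪v, u⟫ - r) 0`.

The right-hand side is at most `s`, and as `⟪v, u⟫ = 1 - ‖u - v‖² / 2` it vanishes unless
`‖u - v‖ ≤ √(2 s / r)`. So the integral is at most `s` times the measure of a spherical cap of
radius `√(2 s / r)`, which is `O(s ^ ((d - 1) / 2))`: the projection along `v` maps a cap of radius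
`ρ ≤ 1` into a `(d - 1)`-dimensional ball of radius `ρ` and contracts distances at most by a factor
`2`, while larger caps are controlled by the total measure of the sphere.
-/

theorem hausdorffMeasure_le_of_antilipschitzWith_domRestrict {X Y : Type*} [EMetricSpace X]
    [EMetricSpace Y] [MeasurableSpace X] [BorelSpace X] [MeasurableSpace Y] [BorelSpace Y]
    {C : NNReal} {f : X → Y} {s : Set X} (hf : AntilipschitzWith C (s.domRestrict f)) {p : ℝ}
    (hp : 0 ≤ p) : μH[p] s ≤ (C : ℝ≥0∞) ^ p * μH[p] (f '' s) :=
  calc μH[p] s = μH[p] (univ : Set s) := by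
        rw [← (isometry_subtype_coe (s := s)).hausdorffMeasure_image (.inl hp), image_univ,
          Subtype.range_coe]
    _ ≤ (C : ℝ≥0∞) ^ p * μH[p] (s.domRestrict f '' univ) := hf.le_hausdorffMeasure_image hp _
    _ = (C : ℝ≥0∞) ^ p * μH[p] (f '' s) := by rw [image_univ, range_domRestrict]

theorem hausdorffMeasure_closedBall_zero {F : Type*} [NormedAddCommGroup F]
    [InnerProductSpace ℝ F] [FiniteDimensional ℝ F] [MeasurableSpace F] [BorelSpace F] {n : ℕ}
    (hn : Module.finrank ℝ F = n) {ρ : ℝ} (hρ : 0 ≤ ρ) :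
    μH[n] (closedBall (0 : F) ρ) =
      ENNReal.ofReal (ρ ^ n) * μH[n] (ball (0 : EuclideanSpace ℝ (Fin n)) 1) := by
  subst hn
  rw [Measure.addHaar_closedBall _ _ hρ, ← map_zero (stdOrthonormalBasis ℝ F).repr,
    ← LinearIsometryEquiv.image_ball,
    (stdOrthonormalBasis ℝ F).repr.isometry.hausdorffMeasure_image (.inl (Nat.cast_nonneg _))]

theorem hausdorffMeasure_ball_lt_top {F : Type*} [NormedAddCommGroup F] [NormedSpace ℝ F]
    [FiniteDimensional ℝ F] [MeasurableSpace F] [BorelSpace F] {n : ℕ}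
    (hn : Module.finrank ℝ F = n) (x : F) (R : ℝ) : μH[n] (ball x R) < ∞ := by
  subst hn
  exact measure_ball_lt_top

section SphericalCap

variable {E : Type*} [NormedAddCommGroup E] [InnerProductSpace ℝ E]

/-- The spherical cap of the unit sphere with centre `v`. The parameter `ρ` bounds the chord
`‖u - v‖` rather than the angle, so that caps are traces of balls. -/
def sphericalCap (v : E) (ρ : ℝ) : Set E :=
  closedBall v ρ ∩ sphere 0 1

theorem inner_eq_one_sub_norm_sub_sq_div_two {u v : E} (hu : ‖u‖ = 1) (hv : ‖v‖ = 1) :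
    ⟪u, v⟫_ℝ = 1 - ‖u - v‖ ^ 2 / 2 := by
  rw [norm_sub_sq_real, hu, hv]
  ring

theorem one_half_le_inner_of_mem_sphericalCap {u v : E} {ρ : ℝ} (hv : ‖v‖ = 1) (hρ : ρ ≤ 1)
    (hu : u ∈ sphericalCap v ρ) : 1 / 2 ≤ ⟪u, v⟫_ℝ := by
  have hdist : ‖u - v‖ ≤ 1 := (mem_closedBall_iff_norm.1 hu.1).trans hρ
  rw [inner_eq_one_sub_norm_sub_sq_div_two (mem_sphere_zero_iff_norm.1 hu.2) hv]
  linarith [pow_le_one₀ (n := 2) (norm_nonneg _) hdist]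

theorem norm_sq_eq_inner_sq_add_norm_orthogonalProjectionOnto_sq {v : E} (hv : ‖v‖ = 1) (x : E) :
    ‖x‖ ^ 2 = ⟪x, v⟫_ℝ ^ 2 + ‖(ℝ ∙ v)ᗮ.orthogonalProjectionOnto x‖ ^ 2 := by
  rw [Submodule.norm_sq_eq_add_norm_sq_projection x (ℝ ∙ v), Submodule.coe_norm,
    Submodule.coe_orthogonalProjectionOnto_apply, Submodule.starProjection_unit_singleton ℝ hv,
    norm_smul, hv, mul_one, Real.norm_eq_abs, sq_abs, real_inner_comm]

theorem mul_norm_sub_le_norm_orthogonalProjectionOnto_sub {u v w : E} {c : ℝ} (hu : ‖u‖ = 1)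
    (hv : ‖v‖ = 1) (hw : ‖w‖ = 1) (hc : 0 ≤ c) (huc : c ≤ ⟪u, v⟫_ℝ) (hwc : c ≤ ⟪w, v⟫_ℝ) :
    c * ‖u - w‖ ≤
      ‖(ℝ ∙ v)ᗮ.orthogonalProjectionOnto u - (ℝ ∙ v)ᗮ.orthogonalProjectionOnto w‖ := by
  set P := (ℝ ∙ v)ᗮ.orthogonalProjectionOnto
  set t := ⟪u, v⟫_ℝ
  set s := ⟪w, v⟫_ℝ
  have pythagoras := norm_sq_eq_inner_sq_add_norm_orthogonalProjectionOnto_sq hv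
  have hPu : ‖P u‖ ^ 2 = 1 - t ^ 2 := by linarith [pythagoras u, congr($hu ^ 2)]
  have hPw : ‖P w‖ ^ 2 = 1 - s ^ 2 := by linarith [pythagoras w, congr($hw ^ 2)]
  have hsub : ‖u - w‖ ^ 2 = (t - s) ^ 2 + ‖P u - P w‖ ^ 2 := by
    rw [pythagoras, inner_sub_left, map_sub]
  have hheight : (t + s) ^ 2 * (t - s) ^ 2 ≤ (4 - (t + s) ^ 2) * ‖P u - P w‖ ^ 2 :=
    calc (t + s) ^ 2 * (t - s) ^ 2
        = (‖P u‖ ^ 2 - ‖P w‖ ^ 2) ^ 2 := by rw [hPu, hPw]; ring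
      _ = (‖P u‖ + ‖P w‖) ^ 2 * (‖P u‖ - ‖P w‖) ^ 2 := by ring
      _ ≤ (4 - (t + s) ^ 2) * ‖P u - P w‖ ^ 2 := by
          have hsum : (‖P u‖ + ‖P w‖) ^ 2 ≤ 4 - (t + s) ^ 2 := by
            nlinarith [add_sq_le (a := ‖P u‖) (b := ‖P w‖), add_sq_le (a := t) (b := s)]
          have hdiff : (‖P u‖ - ‖P w‖) ^ 2 ≤ ‖P u - P w‖ ^ 2 :=
            sq_le_sq.2 (by simpa only [abs_norm] using abs_norm_sub_norm_le (P u) (P w))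
          exact mul_le_mul hsum hdiff (sq_nonneg _) ((sq_nonneg _).trans hsum)
  refine le_of_sq_le_sq ?_ (norm_nonneg _)
  calc (c * ‖u - w‖) ^ 2 = (2 * c) ^ 2 * ‖u - w‖ ^ 2 / 4 := by ring
    _ ≤ (t + s) ^ 2 * ‖u - w‖ ^ 2 / 4 := by gcongr; linarith
    _ ≤ ‖P u - P w‖ ^ 2 := by rw [hsub]; linarith

variable [MeasurableSpace E] [BorelSpace E]

theorem hausdorffMeasure_sphericalCap_le_orthogonal {v : E} (hv : ‖v‖ = 1) {ρ : ℝ} (hρ : ρ ≤ 1)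
    {p : ℝ} (hp : 0 ≤ p) :
    μH[p] (sphericalCap v ρ) ≤ 2 ^ p * μH[p] (closedBall (0 : (ℝ ∙ v)ᗮ) ρ) := by
  set P := (ℝ ∙ v)ᗮ.orthogonalProjectionOnto
  have hanti : AntilipschitzWith 2 ((sphericalCap v ρ).domRestrict P) := by
    refine AntilipschitzWith.of_le_mul_dist fun u w => ?_
    have h := mul_norm_sub_le_norm_orthogonalProjectionOnto_sub
      (mem_sphere_zero_iff_norm.1 u.2.2) hv (mem_sphere_zero_iff_norm.1 w.2.2) (by norm_num)
      (one_half_le_inner_of_mem_sphericalCap hv hρ u.2)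
      (one_half_le_inner_of_mem_sphericalCap hv hρ w.2)
    rw [Subtype.dist_eq, dist_eq_norm, dist_eq_norm, NNReal.coe_ofNat]
    simp only [domRestrict_apply]
    linarith
  have himage : P '' sphericalCap v ρ ⊆ closedBall 0 ρ := by
    rintro _ ⟨u, hu, rfl⟩
    have hPv : P v = 0 := 
      Submodule.orthogonalProjectionOnto_orthogonalComplement_singleton_eq_zero v
    rw [mem_closedBall_zero_iff, ← sub_zero (P u), ← hPv, ← map_sub]
    exact ((ℝ ∙ v)ᗮ.norm_orthogonalProjectionOnto_apply_le _).trans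
      (mem_closedBall_iff_norm.1 hu.1)
  calc μH[p] (sphericalCap v ρ) ≤ 2 ^ p * μH[p] (P '' sphericalCap v ρ) :=
        hausdorffMeasure_le_of_antilipschitzWith_domRestrict hanti hp
    _ ≤ 2 ^ p * μH[p] (closedBall (0 : (ℝ ∙ v)ᗮ) ρ) := by gcongr

variable {n : ℕ} [Fact (Module.finrank ℝ E = n + 1)]

theorem hausdorffMeasure_sphericalCap_le_of_le_one {v : E} (hv : ‖v‖ = 1) {ρ : ℝ} (hρ₀ : 0 ≤ ρ)
    (hρ₁ : ρ ≤ 1) :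
    μH[n] (sphericalCap v ρ) ≤
      2 ^ n * (ENNReal.ofReal (ρ ^ n) * μH[n] (ball (0 : EuclideanSpace ℝ (Fin n)) 1)) := by
  have : FiniteDimensional ℝ E := .of_fact_finrank_eq_succ n
  have hrank : Module.finrank ℝ (ℝ ∙ v)ᗮ = n :=
    Submodule.finrank_orthogonal_span_singleton (norm_ne_zero_iff.1 (hv ▸ one_ne_zero))
  simpa only [ENNReal.rpow_natCast, hausdorffMeasure_closedBall_zero hrank hρ₀] using
    hausdorffMeasure_sphericalCap_le_orthogonal hv hρ₁ n.cast_nonneg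

variable (E n) in
theorem hausdorffMeasure_sphere_lt_top : μH[n] (sphere (0 : E) 1) < ∞ := by
  have : FiniteDimensional ℝ E := .of_fact_finrank_eq_succ n
  refine (isCompact_sphere _ _).measure_lt_top_of_nhdsWithin fun v hv =>
    ⟨sphericalCap v 1, Filter.inter_mem (mem_nhdsWithin_of_mem_nhds
      (closedBall_mem_nhds v one_pos)) self_mem_nhdsWithin, ?_⟩
  refine (hausdorffMeasure_sphericalCap_le_of_le_one (mem_sphere_zero_iff_norm.1 hv)
    zero_le_one le_rfl).trans_lt ?_
  have hball : μH[n] (ball (0 : EuclideanSpace ℝ (Fin n)) 1) ≠ ∞ :=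
    (hausdorffMeasure_ball_lt_top finrank_euclideanSpace_fin 0 1).ne
  finiteness

theorem hausdorffMeasure_sphericalCap_le {v : E} (hv : ‖v‖ = 1) {ρ : ℝ} (hρ : 0 ≤ ρ) :
    μH[n] (sphericalCap v ρ) ≤
      (2 ^ n * μH[n] (ball (0 : EuclideanSpace ℝ (Fin n)) 1) + μH[n] (sphere (0 : E) 1)) *
        ENNReal.ofReal (ρ ^ n) := by
  rw [add_mul]
  rcases le_total ρ 1 with hρ₁ | hρ₁
  · refine (hausdorffMeasure_sphericalCap_le_of_le_one hv hρ hρ₁).trans (le_add_right ?_)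
    rw [mul_comm (ENNReal.ofReal _), mul_assoc]
  · refine le_add_left ((measure_mono inter_subset_right).trans (le_mul_of_one_le_right' ?_))
    exact ENNReal.one_le_ofReal.2 (one_le_pow₀ hρ₁)

end SphericalCap

theorem sphericalMeasure_closedBall {n : ℕ} (v : EuclideanSpace ℝ (Fin (n + 1))) (ρ : ℝ) :
    sphericalMeasure (n + 1) (closedBall v ρ) = μH[n] (sphericalCap v ρ) := by
  rw [sphericalMeasure, Measure.restrict_apply measurableSet_closedBall, Nat.cast_succ,
    add_sub_cancel_right, sphericalCap]

theorem exists_forall_sphericalMeasure_closedBall_le (n : ℕ) :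
    ∃ C : ℝ, 0 < C ∧ ∀ v : EuclideanSpace ℝ (Fin (n + 1)), ‖v‖ = 1 → ∀ ρ : ℝ, 0 ≤ ρ →
      sphericalMeasure (n + 1) (closedBall v ρ) ≤ ENNReal.ofReal (C * ρ ^ n) := by
  have : Fact (Module.finrank ℝ (EuclideanSpace ℝ (Fin (n + 1))) = n + 1) :=
    ⟨finrank_euclideanSpace_fin⟩
  set M := 2 ^ n * μH[n] (ball (0 : EuclideanSpace ℝ (Fin n)) 1) +
    μH[n] (sphere (0 : EuclideanSpace ℝ (Fin (n + 1))) 1)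
  have hM : M ≠ ∞ := by
    have hball : μH[n] (ball (0 : EuclideanSpace ℝ (Fin n)) 1) ≠ ∞ :=
      (hausdorffMeasure_ball_lt_top finrank_euclideanSpace_fin 0 1).ne
    have hsphere := (hausdorffMeasure_sphere_lt_top (EuclideanSpace ℝ (Fin (n + 1))) n).ne
    finiteness
  refine ⟨M.toReal + 1, by positivity, fun v hv ρ hρ => ?_⟩
  calc sphericalMeasure (n + 1) (closedBall v ρ)
      = μH[n] (sphericalCap v ρ) := sphericalMeasure_closedBall v ρ
    _ ≤ M * ENNReal.ofReal (ρ ^ n) := hausdorffMeasure_sphericalCap_le hv hρ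
    _ ≤ ENNReal.ofReal (M.toReal + 1) * ENNReal.ofReal (ρ ^ n) := by
        gcongr
        exact (ENNReal.le_ofReal_iff_toReal_le hM (by positivity)).2 (by linarith)
    _ = ENNReal.ofReal ((M.toReal + 1) * ρ ^ n) := (ENNReal.ofReal_mul (by positivity)).symm

section SupportFunction

variable {d : ℕ} {K : Set (EuclideanSpace ℝ (Fin d))}

theorem suppFn_convexHull (K : Set (EuclideanSpace ℝ (Fin d))) (u : EuclideanSpace ℝ (Fin d)) :
    suppFn (convexHull ℝ K) u = suppFn K u := by
  refine csSup_eq_csSup_of_forall_exists_le ?_ fun _ ht =>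
    ⟨_, image_mono (subset_convexHull ℝ K) ht, le_rfl⟩
  rintro _ ⟨x, hx, rfl⟩
  have hconvex : ConvexOn ℝ univ fun x => ⟪x, u⟫_ℝ :=
    ((innerₗ _).flip u).convexOn convex_univ
  obtain ⟨w, hwK, hw⟩ := hconvex.exists_ge_of_mem_convexHull (subset_univ K) hx
  exact ⟨_, mem_image_of_mem _ hwK, hw⟩

theorem bddAbove_image_inner (hK : Bornology.IsBounded K) (u : EuclideanSpace ℝ (Fin d)) :
    BddAbove ((fun x => ⟪x, u⟫_ℝ) '' K) :=
  (((innerSL ℝ).flip u).lipschitz.isBounded_image hK).bddAbove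

theorem suppFn_union_singleton (hK : Bornology.IsBounded K) (hne : K.Nonempty)
    (y u : EuclideanSpace ℝ (Fin d)) : suppFn (K ∪ {y}) u = max ⟪y, u⟫_ℝ (suppFn K u) := by
  rw [suppFn, union_singleton, image_insert_eq,
    csSup_insert (bddAbove_image_inner hK u) (hne.image _), suppFn]

theorem suppFn_convexHull_union_singleton_sub (hK : Bornology.IsBounded K) (hne : K.Nonempty)
    (y u : EuclideanSpace ℝ (Fin d)) :
    suppFn (convexHull ℝ (K ∪ {y})) u - suppFn K u = max (⟪y, u⟫_ℝ - suppFn K u) 0 := by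
  rw [suppFn_convexHull, suppFn_union_singleton hK hne, ← max_sub_sub_right, sub_self]

theorem inner_add_le_suppFn_of_closedBall_subset (hK : Bornology.IsBounded K)
    {z u : EuclideanSpace ℝ (Fin d)} {r : ℝ} (hr : 0 ≤ r) (hzK : closedBall z r ⊆ K)
    (hu : ‖u‖ = 1) : ⟪z, u⟫_ℝ + r ≤ suppFn K u := by
  have hmem : z + r • u ∈ K := hzK (by simp [norm_smul, hu, abs_of_nonneg hr])
  calc ⟪z, u⟫_ℝ + r = ⟪z + r • u, u⟫_ℝ := by
        rw [inner_add_left, real_inner_smul_left, real_inner_self_eq_norm_sq, hu, one_pow, mul_one]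
    _ ≤ suppFn K u := le_csSup (bddAbove_image_inner hK u) (mem_image_of_mem _ hmem)

theorem add_mul_inner_sub_le_indicator {E : Type*} [NormedAddCommGroup E] [InnerProductSpace ℝ E]
    {r s : ℝ} (hr : 0 < r) (hs : 0 ≤ s) {v u : E} (hv : ‖v‖ = 1) (hu : ‖u‖ = 1) :
    max ((r + s) * ⟪u, v⟫_ℝ - r) 0 ≤ (closedBall v √(2 * s / r)).indicator (fun _ => s) u := by
  rw [inner_eq_one_sub_norm_sub_sq_div_two hu hv]
  by_cases hmem : u ∈ closedBall v √(2 * s / r)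
  · rw [indicator_of_mem hmem]
    refine max_le ?_ hs
    nlinarith [mul_nonneg (add_nonneg hr.le hs) (sq_nonneg ‖u - v‖)]
  · rw [indicator_of_notMem hmem]
    rw [mem_closedBall_iff_norm, not_le, Real.sqrt_lt (by positivity) (norm_nonneg _),
      div_lt_iff₀ hr] at hmem
    refine max_le ?_ le_rfl
    nlinarith [mul_nonneg hs (sq_nonneg ‖u - v‖)]

theorem suppFn_convexHull_union_singleton_sub_le_indicator (hK : Bornology.IsBounded K)
    {r s : ℝ} (hr : 0 < r) (hs : 0 ≤ s) {z v u : EuclideanSpace ℝ (Fin d)}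
    (hzK : closedBall z r ⊆ K) (hv : ‖v‖ = 1) (hu : ‖u‖ = 1) :
    suppFn (convexHull ℝ (K ∪ {z + (r + s) • v})) u - suppFn K u ≤
      (closedBall v √(2 * s / r)).indicator (fun _ => s) u := by
  have hne : K.Nonempty := ⟨z, hzK (mem_closedBall_self hr.le)⟩
  have hball := inner_add_le_suppFn_of_closedBall_subset hK hr.le hzK hu
  calc suppFn (convexHull ℝ (K ∪ {z + (r + s) • v})) u - suppFn K u
      = max (⟪z + (r + s) • v, u⟫_ℝ - suppFn K u) 0 :=
        suppFn_convexHull_union_singleton_sub hK hne _ u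
    _ ≤ max ((r + s) * ⟪u, v⟫_ℝ - r) 0 := by
        rw [inner_add_left, real_inner_smul_left, real_inner_comm v]
        gcongr ?_ ⊔ _
        linarith
    _ ≤ (closedBall v √(2 * s / r)).indicator (fun _ => s) u :=
        add_mul_inner_sub_le_indicator hr hs hv hu

theorem setIntegral_suppFn_convexHull_union_singleton_sub_le (hK : Bornology.IsBounded K)
    {r s : ℝ} (hr : 0 < r) (hs : 0 ≤ s) {z v : EuclideanSpace ℝ (Fin d)}
    (hzK : closedBall z r ⊆ K) (hv : ‖v‖ = 1) {φ : Measure (EuclideanSpace ℝ (Fin d))}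
    (hφ : φ (closedBall v √(2 * s / r)) ≠ ∞) :
    ∫ u in sphere 0 1, (suppFn (convexHull ℝ (K ∪ {z + (r + s) • v})) u - suppFn K u) ∂φ ≤
      φ.real (closedBall v √(2 * s / r)) * s := by
  have hne : K.Nonempty := ⟨z, hzK (mem_closedBall_self hr.le)⟩
  have hint : IntegrableOn ((closedBall v √(2 * s / r)).indicator fun _ => s) (sphere 0 1) φ :=
    ((integrable_indicator_iff measurableSet_closedBall).2 (integrableOn_const hφ)).integrableOn
  calc ∫ u in sphere 0 1, (suppFn (convexHull ℝ (K ∪ {z + (r + s) • v})) u - suppFn K u) ∂φ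
      ≤ ∫ u in sphere 0 1, (closedBall v √(2 * s / r)).indicator (fun _ => s) u ∂φ := by
        refine integral_mono_of_nonneg (.of_forall fun u => ?_) hint
          (ae_restrict_of_forall_mem isClosed_sphere.measurableSet fun u hu => ?_)
        · exact (le_max_right _ _).trans_eq
            (suppFn_convexHull_union_singleton_sub hK hne _ u).symm
        · exact suppFn_convexHull_union_singleton_sub_le_indicator hK hr hs hzK hv
            (mem_sphere_zero_iff_norm.1 hu)
    _ = (φ.restrict (sphere 0 1)).real (closedBall v √(2 * s / r)) * s := by
        rw [integral_indicator_const _ measurableSet_closedBall, smul_eq_mul]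
    _ ≤ φ.real (closedBall v √(2 * s / r)) * s := by
        gcongr
        exact ENNReal.toReal_mono hφ (Measure.restrict_apply_le _ _)

end SupportFunction

section SlidingBall

/-- A ball of radius `r` slides freely inside `K`: every point of `K` lies in a closed ball of
radius `r` contained in `K`. -/
def BallSlidesFreely {X : Type*} [PseudoMetricSpace X] (r : ℝ) (K : Set X) : Prop :=
  ∀ x ∈ K, ∃ z, x ∈ closedBall z r ∧ closedBall z r ⊆ K

theorem BallSlidesFreely.exists_closedBall_subset_of_infDist_lt {E : Type*} [NormedAddCommGroup E]
    [NormedSpace ℝ E] {r δ : ℝ} {K : Set E} (hslide : BallSlidesFreely r K) {y : E}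
    (hpos : 0 < infDist y K) (hlt : infDist y K < δ) :
    ∃ (z v : E) (s : ℝ), closedBall z r ⊆ K ∧ ‖v‖ = 1 ∧ 0 < s ∧ s < δ ∧ y = z + (r + s) • v := by
  have hne : K.Nonempty := by
    by_contra! hempty
    exact hpos.ne' (hempty ▸ infDist_empty)
  obtain ⟨x, hxK, hyx⟩ := (infDist_lt_iff hne).1 hlt
  obtain ⟨z, hxz, hzK⟩ := hslide x hxK
  have hyz : r < ‖y - z‖ := by
    rw [← dist_eq_norm]
    by_contra! hball
    exact hpos.ne' (infDist_zero_of_mem (hzK hball))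
  have hzy : ‖y - z‖ < r + δ := by
    rw [← dist_eq_norm]
    linarith [dist_triangle y x z, mem_closedBall.1 hxz]
  have hyz₀ : ‖y - z‖ ≠ 0 := ((nonneg_of_mem_closedBall hxz).trans_lt hyz).ne'
  refine ⟨z, ‖y - z‖⁻¹ • (y - z), ‖y - z‖ - r, hzK,
    norm_smul_inv_norm (norm_ne_zero_iff.1 hyz₀), by linarith, by linarith, ?_⟩
  rw [add_sub_cancel, smul_inv_smul₀ hyz₀, add_sub_cancel]

end SlidingBall

theorem sqrt_pow_mul_eq_rpow_mul_rpow {r ε : ℝ} (hr : 0 < r) (hε : 0 < ε) (n : ℕ) :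
    √(2 * (2 * ε) / r) ^ n * (2 * ε) =
      2 ^ (n + 1) * r ^ (-(n : ℝ) / 2) * ε ^ ((n : ℝ) / 2 + 1) := by
  have hsqrt : √(2 * (2 * ε) / r) = 2 * (√r)⁻¹ * √ε := by
    rw [show 2 * (2 * ε) / r = 2 ^ 2 * (r⁻¹ * ε) by ring, Real.sqrt_mul (by positivity),
      Real.sqrt_sq zero_le_two, Real.sqrt_mul (by positivity), Real.sqrt_inv, mul_assoc]
  rw [hsqrt, Real.rpow_add_one hε.ne', neg_div, Real.rpow_neg hr.le,
    Real.rpow_div_two_eq_sqrt _ hr.le, Real.rpow_div_two_eq_sqrt _ hε.le, Real.rpow_natCast,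
    Real.rpow_natCast]
  ring

theorem statement4_general {d : ℕ} (hd : 1 ≤ d) :
    ∃ C : ℝ, 0 < C ∧ ∀ K : Set (EuclideanSpace ℝ (Fin d)), Bornology.IsBounded K →
      ∀ r : ℝ, 0 < r → BallSlidesFreely r K →
      ∀ (φ : Measure (EuclideanSpace ℝ (Fin d))) (a : ℝ), 0 ≤ a →
        φ ≤ ENNReal.ofReal a • sphericalMeasure d →
      ∀ ε : ℝ, 0 < ε → ∀ y : EuclideanSpace ℝ (Fin d), infDist y K = ε →
        (∫ u in sphere (0 : EuclideanSpace ℝ (Fin d)) 1,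
            (suppFn (convexHull ℝ (K ∪ {y})) u - suppFn K u) ∂φ) ≤
          C * a * r ^ ((1 - (d : ℝ)) / 2) * ε ^ (((d : ℝ) + 1) / 2) := by
  obtain ⟨n, rfl⟩ := Nat.exists_eq_add_of_le' hd
  obtain ⟨C, hC, hcap⟩ := exists_forall_sphericalMeasure_closedBall_le n
  refine ⟨C * 2 ^ (n + 1), by positivity, fun K hK r hr hslide φ a ha hφ ε hε y hy => ?_⟩
  -- `K` need not contain a point nearest to `y`; the factor `2` makes room for a near-minimizer.
  obtain ⟨z, v, s, hzK, hv, hs, hsε, rfl⟩ :=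
    hslide.exists_closedBall_subset_of_infDist_lt (hε.trans_eq hy.symm)
      (show infDist y K < 2 * ε by linarith)
  have hφcap : φ (closedBall v √(2 * s / r)) ≤ ENNReal.ofReal (a * (C * √(2 * s / r) ^ n)) := by
    rw [ENNReal.ofReal_mul ha]
    exact (hφ _).trans (mul_le_mul_right (hcap v hv _ (Real.sqrt_nonneg _)) _)
  calc _ ≤ φ.real (closedBall v √(2 * s / r)) * s :=
        setIntegral_suppFn_convexHull_union_singleton_sub_le hK hr hs.le hzK hv
          (hφcap.trans_lt ENNReal.ofReal_lt_top).ne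
    _ ≤ a * (C * √(2 * s / r) ^ n) * s := by
        gcongr
        exact ENNReal.toReal_le_of_le_ofReal (by positivity) hφcap
    _ ≤ a * (C * √(2 * (2 * ε) / r) ^ n) * (2 * ε) := by gcongr
    _ = a * C * (√(2 * (2 * ε) / r) ^ n * (2 * ε)) := by ring
    _ = _ := by
        rw [sqrt_pow_mul_eq_rpow_mul_rpow hr hε, Nat.cast_succ]
        ring_nf

theorem statement4 {d : ℕ} (hd : 2 ≤ d) (K : Set (EuclideanSpace ℝ (Fin d)))
    (hKcomp : IsCompact K) (hKconv : Convex ℝ K) (hKint : (interior K).Nonempty)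
    (r : ℝ) (hr : 0 < r)
    (hslide : ∀ x ∈ K, ∃ z : EuclideanSpace ℝ (Fin d),
      x ∈ closedBall z r ∧ closedBall z r ⊆ K)
    (φ : Measure (EuclideanSpace ℝ (Fin d))) (a : ℝ) (ha : 0 < a)
    (hφ : φ ≤ ENNReal.ofReal a • sphericalMeasure d) :
    ∃ c : ℝ, 0 < c ∧ ∀ ε : ℝ, 0 < ε →
      ∀ y : EuclideanSpace ℝ (Fin d), infDist y K = ε →
        (∫ u in sphere (0 : EuclideanSpace ℝ (Fin d)) 1,
            (suppFn (convexHull ℝ (K ∪ {y})) u - suppFn K u) ∂φ) ≤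
          c * ε ^ (((d : ℝ) + 1) / 2) := by
  obtain ⟨C, hC, hbound⟩ := statement4_general (one_le_two.trans hd)
  exact ⟨_, by positivity, hbound K hKcomp.isBounded r hr hslide φ a ha.le hφ⟩
end

section
/- Let d ≥ 2 and let K be a convex body in ℝ^d with diameter D = diam(K). Let 0 < ε ≤ 1, let y ∈ ℝ^d satisfy ‖y‖ = ε, and suppose the origin is the point of K nearest to y (so dist(y, K) = ε). Set N = y/ε and let β ∈ [0, π/2) be defined by cos β = D/√(D² + ε²). Then every unit vector u with ⟨u, N⟩ ≥ cos(β/2) satisfies h(K^y, u) − h(K, u) ≥ D·sin(β/2). -/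
/-!
The convex body lies in the half-space bounded by the hyperplane through the nearest point `p`
orthogonal to `y - p`. A direction `u` at angle at most `b = β / 2` to `y - p` therefore makes an
angle at least `π / 2 - b` with every `x - p`, `x ∈ K`, so relative to `p` the support function of
`K` at `u` is at most `D sin b`, while the point `y` contributes at least `ε cos b`. Finally
`tan β = ε / D` and `2 tan b ≤ tan β` give `ε cos b ≥ 2 D sin b`.
-/

open Metric Set
open scoped InnerProductSpace

section

open InnerProductGeometry Real

variable {E : Type*} [NormedAddCommGroup E] [InnerProductSpace ℝ E]

theorem pi_div_two_le_angle_of_inner_nonpos {x y : E} (h : ⟪x, y⟫_ℝ ≤ 0) : π / 2 ≤ angle x y := by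
  rw [← arccos_zero]
  exact antitone_arccos (div_nonpos_of_nonpos_of_nonneg h (by positivity))

theorem norm_mul_norm_mul_cos_le_inner {x y : E} {b : ℝ} (hb : b ≤ π) (hxy : angle x y ≤ b) :
    ‖x‖ * ‖y‖ * cos b ≤ ⟪x, y⟫_ℝ := by
  rw [← cos_angle_mul_norm_mul_norm, mul_comm]
  gcongr
  exact cos_le_cos_of_nonneg_of_le_pi (angle_nonneg x y) hb hxy

theorem inner_le_norm_mul_norm_mul_sin {x y u : E} {b : ℝ} (hb : b ≤ π / 2)
    (hxy : ⟪x, y⟫_ℝ ≤ 0) (hyu : angle y u ≤ b) : ⟪x, u⟫_ℝ ≤ ‖x‖ * ‖u‖ * sin b := by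
  have hxu : π / 2 - b ≤ angle x u := by
    linarith [pi_div_two_le_angle_of_inner_nonpos hxy, angle_comm u y,
      angle_le_angle_add_angle x u y]
  rw [← cos_angle_mul_norm_mul_norm, mul_comm, ← cos_pi_div_two_sub]
  gcongr
  exact cos_le_cos_of_nonneg_of_le_pi (by linarith) (angle_le_pi x u) hxu

theorem angle_le_of_cos_le_inner_inv_norm_smul {y u : E} {b : ℝ} (hy : y ≠ 0) (hu : ‖u‖ = 1)
    (hb0 : 0 ≤ b) (hbπ : b ≤ π) (h : cos b ≤ ⟪u, ‖y‖⁻¹ • y⟫_ℝ) : angle y u ≤ b := by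
  have hN : ‖‖y‖⁻¹ • y‖ = 1 := norm_smul_inv_norm (𝕜 := ℝ) hy
  rw [inner_eq_cos_angle_of_norm_eq_one hu hN,
    angle_smul_right_of_pos u y (inv_pos.2 (norm_pos_iff.2 hy)), angle_comm] at h
  exact (strictAntiOn_cos.le_iff_ge ⟨hb0, hbπ⟩ ⟨angle_nonneg y u, angle_le_pi y u⟩).1 h

theorem inner_sub_sub_nonpos_of_forall_dist_le {K : Set E} (hK : Convex ℝ K) {y p x : E}
    (hp : p ∈ K) (hmin : ∀ z ∈ K, dist y p ≤ dist y z) (hx : x ∈ K) :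
    ⟪x - p, y - p⟫_ℝ ≤ 0 := by
  have : Nonempty K := ⟨⟨p, hp⟩⟩
  have hinf : ‖y - p‖ = ⨅ z : K, ‖y - z‖ := by
    refine le_antisymm (le_ciInf fun z => ?_) (ciInf_le ⟨0, ?_⟩ (⟨p, hp⟩ : K))
    · simpa only [dist_eq_norm] using hmin z z.2
    · rintro _ ⟨z, rfl⟩
      exact norm_nonneg _
  rw [real_inner_comm]
  exact (norm_eq_iInf_iff_real_inner_le_zero hK hp).1 hinf x hx

/-- The support function of a set in a real inner product space of any dimension. It has junk value
`0` on sets that are empty or unbounded in the direction `u`; on Euclidean space it is `suppFn`. -/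
noncomputable def supportFunction (K : Set E) (u : E) : ℝ :=
  sSup ((fun x => ⟪x, u⟫_ℝ) '' K)

theorem inner_le_supportFunction {K : Set E} (hK : Bornology.IsBounded K) {x : E} (hx : x ∈ K)
    (u : E) : ⟪x, u⟫_ℝ ≤ supportFunction K u :=
  le_csSup ((innerSL ℝ).flip u |>.lipschitz.isBounded_image hK).bddAbove (mem_image_of_mem _ hx)

theorem supportFunction_le {K : Set E} (hK : K.Nonempty) {u : E} {c : ℝ}
    (h : ∀ x ∈ K, ⟪x, u⟫_ℝ ≤ c) : supportFunction K u ≤ c :=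
  csSup_le (hK.image _) (forall_mem_image.2 h)

theorem supportFunction_le_inner_add_mul_sin {K : Set E} (hK : Convex ℝ K) {y p u : E} {R b : ℝ}
    (hp : p ∈ K) (hmin : ∀ z ∈ K, dist y p ≤ dist y z) (hKR : K ⊆ closedBall p R)
    (hb : b ≤ π / 2) (hyu : angle (y - p) u ≤ b) :
    supportFunction K u ≤ ⟪p, u⟫_ℝ + R * ‖u‖ * sin b := by
  have hsin : 0 ≤ sin b :=
    sin_nonneg_of_nonneg_of_le_pi ((angle_nonneg _ _).trans hyu) (by linarith [pi_pos])
  refine supportFunction_le ⟨p, hp⟩ fun x hx => ?_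
  calc ⟪x, u⟫_ℝ = ⟪p, u⟫_ℝ + ⟪x - p, u⟫_ℝ := by rw [inner_sub_left, add_sub_cancel]
    _ ≤ ⟪p, u⟫_ℝ + ‖x - p‖ * ‖u‖ * sin b := by
      gcongr
      exact inner_le_norm_mul_norm_mul_sin hb
        (inner_sub_sub_nonpos_of_forall_dist_le hK hp hmin hx) hyu
    _ ≤ ⟪p, u⟫_ℝ + R * ‖u‖ * sin b := by
      gcongr
      exact mem_closedBall_iff_norm.1 (hKR hx)

theorem inner_add_mul_cos_le_supportFunction {K : Set E} (hK : Bornology.IsBounded K) {y u : E}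
    {b : ℝ} (hy : y ∈ K) (p : E) (hb : b ≤ π) (hyu : angle (y - p) u ≤ b) :
    ⟪p, u⟫_ℝ + ‖y - p‖ * ‖u‖ * cos b ≤ supportFunction K u :=
  calc ⟪p, u⟫_ℝ + ‖y - p‖ * ‖u‖ * cos b ≤ ⟪p, u⟫_ℝ + ⟪y - p, u⟫_ℝ := by
        gcongr
        exact norm_mul_norm_mul_cos_le_inner hb hyu
    _ = ⟪y, u⟫_ℝ := by rw [inner_sub_left, add_sub_cancel]
    _ ≤ supportFunction K u := inner_le_supportFunction hK hy u

theorem mul_sin_eq_mul_cos_of_cos_eq_div_sqrt {a c θ : ℝ} (hc : 0 ≤ c) (hθ : 0 ≤ sin θ)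
    (hcos : cos θ = a / √(a ^ 2 + c ^ 2)) : a * sin θ = c * cos θ := by
  set r := √(a ^ 2 + c ^ 2)
  have hr2 : r ^ 2 = a ^ 2 + c ^ 2 := sq_sqrt (by positivity)
  have ha : a = r * cos θ := by
    rw [hcos, mul_comm, div_mul_cancel_of_imp]
    intro h
    nlinarith
  have hc' : c = r * sin θ := by
    rw [← sq_eq_sq₀ hc (by positivity), mul_pow, sin_sq]
    linear_combination -hr2 - (a + r * cos θ) * ha
  calc a * sin θ = r * cos θ * sin θ := by rw [← ha]
    _ = c * cos θ := by rw [hc']; ring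

theorem two_mul_mul_sin_le_mul_cos {a c b : ℝ} (hc : 0 ≤ c) (hb : 0 < cos b)
    (h : a * sin (2 * b) = c * cos (2 * b)) : 2 * a * sin b ≤ c * cos b := by
  refine le_of_mul_le_mul_right ?_ hb
  calc 2 * a * sin b * cos b = c * cos (2 * b) := by rw [← h, sin_two_mul]; ring
    _ ≤ c * cos b ^ 2 := by
      gcongr
      linarith [cos_two_mul b, cos_sq_le_one b]
    _ = c * cos b * cos b := by ring

theorem statement9_general {K : Set E} (hK : Convex ℝ K) {y p u : E} {R β : ℝ} (hp : p ∈ K)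
    (hne : y ≠ p) (hmin : ∀ z ∈ K, dist y p ≤ dist y z) (hKR : K ⊆ closedBall p R)
    (hβ0 : 0 ≤ β) (hβ1 : β < π / 2) (hcosβ : cos β = R / √(R ^ 2 + ‖y - p‖ ^ 2))
    (hu : ‖u‖ = 1) (huN : cos (β / 2) ≤ ⟪u, ‖y - p‖⁻¹ • (y - p)⟫_ℝ) :
    R * sin (β / 2) ≤ supportFunction (convexHull ℝ (K ∪ {y})) u - supportFunction K u := by
  have hyu : angle (y - p) u ≤ β / 2 :=
    angle_le_of_cos_le_inner_inv_norm_smul (sub_ne_zero.2 hne) hu (by linarith) (by linarith) huN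
  have hbdd : Bornology.IsBounded (convexHull ℝ (K ∪ {y})) :=
    isBounded_convexHull.2 ((isBounded_closedBall.subset hKR).union Bornology.isBounded_singleton)
  have hlower := inner_add_mul_cos_le_supportFunction hbdd
    (subset_convexHull ℝ _ (mem_union_right K rfl)) p (by linarith) hyu
  have hupper := supportFunction_le_inner_add_mul_sin hK hp hmin hKR (by linarith) hyu
  have htan : R * sin β = ‖y - p‖ * cos β := mul_sin_eq_mul_cos_of_cos_eq_div_sqrt (norm_nonneg _)
    (sin_nonneg_of_nonneg_of_le_pi hβ0 (by linarith)) hcosβ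
  have hhalf : 2 * R * sin (β / 2) ≤ ‖y - p‖ * cos (β / 2) := by
    refine two_mul_mul_sin_le_mul_cos (norm_nonneg _)
      (cos_pos_of_mem_Ioo ⟨by linarith, by linarith⟩) ?_
    rwa [mul_div_cancel₀ β two_ne_zero]
  rw [hu, mul_one] at hlower hupper
  linarith

end

theorem statement9 {d : ℕ} (hd : 2 ≤ d) (K : Set (EuclideanSpace ℝ (Fin d)))
    (hKcomp : IsCompact K) (hKconv : Convex ℝ K) (hKint : (interior K).Nonempty)
    (ε : ℝ) (hε0 : 0 < ε) (hε1 : ε ≤ 1)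
    (y : EuclideanSpace ℝ (Fin d)) (hynorm : ‖y‖ = ε)
    (h0K : (0 : EuclideanSpace ℝ (Fin d)) ∈ K)
    (hnearest : ∀ z ∈ K, ε ≤ dist y z)
    (β : ℝ) (hβ0 : 0 ≤ β) (hβ1 : β < Real.pi / 2)
    (hcosβ : Real.cos β = diam K / Real.sqrt ((diam K) ^ 2 + ε ^ 2)) :
    ∀ u : EuclideanSpace ℝ (Fin d), ‖u‖ = 1 →
      Real.cos (β / 2) ≤ ⟪u, ε⁻¹ • y⟫_ℝ →
      diam K * Real.sin (β / 2) ≤ suppFn (convexHull ℝ (K ∪ {y})) u - suppFn K u := by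
  subst hynorm
  exact fun u hu huN => statement9_general hKconv h0K (norm_pos_iff.1 hε0) (by simpa using hnearest)
    (fun x hx => dist_le_diam_of_mem hKcomp.isBounded hx h0K) hβ0 hβ1 (by rwa [sub_zero]) hu
    (by rwa [sub_zero])
end
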